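/- arXiv:1102.2302 — 4 statements merged into one kernel-verified Lean document; each statement's English description precedes it below -/
import Mathlib

section
/- Let p be a prime, F a finite field of characteristic p, and T a commutative local F-algebra that is finite-dimensional as an F-vector space, with maximal ideal m. Let G be a group, ρ : G → GL_2(T) a group homomorphism, and write ρ̄ for the composite of ρ with the reduction map GL_2(T) → GL_2(T/m). Let I be a subgroup of G and H a normal subgroup of I such that: (i) the quotient group I/H is cyclic of order dividing p − 1; (ii) ρ(h) = 1 for all h ∈ H; and (iii) for every g ∈ I the matrix ρ̄(g) is unipotent, i.e. (ρ̄(g) − 1)^2 = 0. Then ρ(g) = 1 for all g ∈ I. -/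
/-!
Fix `g ∈ I` and put `u = ρ g`. Since `m` is nilpotent and `u - 1` is nilpotent modulo `m`, the
matrix `u - 1` is itself nilpotent. Moreover `u ^ e = 1`, where `e = |I / H|` is invertible in `T`.
In the factorisation `0 = u ^ e - 1 = (1 + u + ⋯ + u ^ (e - 1)) (u - 1)` the first factor is `e`
plus a nilpotent element commuting with it, hence a unit, so `u = 1`.
-/

section Ring

open Finset

variable {R : Type*} [Ring R] {u : R} {e : ℕ}

theorem isUnit_geom_sum_of_isNilpotent_sub_one (hu : IsNilpotent (u - 1)) (he : IsUnit (e : R)) :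
    IsUnit (∑ i ∈ range e, u ^ i) := by
  have hsum : ∑ i ∈ range e, u ^ i = e + (u - 1) * ∑ i ∈ range e, ∑ j ∈ range i, u ^ j := by
    simp only [mul_sum (range e), mul_geom_sum, sum_sub_distrib, sum_const, card_range,
      nsmul_eq_mul, mul_one, add_sub_cancel]
  have hcomm : Commute (u - 1) (∑ i ∈ range e, ∑ j ∈ range i, u ^ j) :=
    .sum_right _ _ _ fun _ _ ↦ .sum_right _ _ _ fun j _ ↦
      ((Commute.refl u).sub_left (.one_left u)).pow_right j
  rw [hsum]
  exact (hcomm.isNilpotent_mul_right hu).isUnit_add_left_of_commute he (Nat.cast_commute e _).symm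

theorem eq_one_of_isNilpotent_sub_one_of_pow_eq_one (hu : IsNilpotent (u - 1))
    (he : IsUnit (e : R)) (hpow : u ^ e = 1) : u = 1 := by
  have hmul : (∑ i ∈ range e, u ^ i) * (u - 1) = 0 := by rw [geom_sum_mul, hpow, sub_self]
  exact sub_eq_zero.mp <|
    (isUnit_geom_sum_of_isNilpotent_sub_one hu he).mul_right_eq_zero.mp hmul

theorem isUnit_natCast_of_dvd_sub_one {p : ℕ} (hp : p.Prime) [CharP R p] (he : e ∣ p - 1) :
    IsUnit (e : R) := by
  rw [CharP.isUnit_natCast_iff hp]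
  exact fun hpe ↦ Nat.not_dvd_of_pos_of_lt (Nat.sub_pos_of_lt hp.one_lt)
    (Nat.sub_lt hp.pos one_pos) (hpe.trans he)

end Ring

section Matrix

variable {n S T : Type*} [Fintype n] [DecidableEq n] [CommSemiring T]

theorem pow_mem_matrix_pow {J : Ideal T} {M : Matrix n n T} (hM : M ∈ J.matrix n) (k : ℕ) :
    M ^ k ∈ (J ^ k).matrix n := by
  induction k with
  | zero => simp
  | succ k ih =>
    intro i j
    rw [pow_succ M, Matrix.mul_apply, pow_succ J]
    exact Ideal.sum_mem _ fun l _ ↦ Ideal.mul_mem_mul (ih i l) (hM l j)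

theorem isNilpotent_of_mem_matrix_nilradical {M : Matrix n n T}
    (hM : M ∈ (nilradical T).matrix n) : IsNilpotent M := by
  -- The nilradical need not be nilpotent, but the ideal generated by the entries is,
  -- being finitely generated.
  let J : Ideal T := Ideal.span (Set.range fun ij : n × n ↦ M ij.1 ij.2)
  have hMJ : M ∈ J.matrix n := fun i j ↦ Ideal.subset_span ⟨(i, j), rfl⟩
  have hJ : J ≤ nilradical T := Ideal.span_le.mpr <| by rintro _ ⟨ij, rfl⟩; exact hM ij.1 ij.2
  have hJfg : J.FG := Submodule.fg_span (Set.finite_range _)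
  obtain ⟨k, hk⟩ := hJfg.isNilpotent_iff_le_nilradical.mpr hJ
  have hMk : M ^ k ∈ (J ^ k).matrix n := pow_mem_matrix_pow hMJ k
  rw [hk, Ideal.zero_eq_bot, Ideal.matrix_bot] at hMk
  exact ⟨k, hMk⟩

theorem isNilpotent_of_isNilpotent_mapMatrix [Semiring S] {f : T →+* S}
    (hf : RingHom.ker f ≤ nilradical T) {M : Matrix n n T} (hM : IsNilpotent (f.mapMatrix M)) :
    IsNilpotent M := by
  obtain ⟨k, hk⟩ := hM
  refine IsNilpotent.of_pow (m := k) <| isNilpotent_of_mem_matrix_nilradical fun i j ↦ hf ?_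
  rw [← map_pow] at hk
  exact congr_fun₂ hk i j

end Matrix

theorem weight_one_stmt3_general {n S T Γ : Type*} [Fintype n] [DecidableEq n] [CommRing S]
    [CommRing T] [Group Γ] {f : T →+* S} (hf : RingHom.ker f ≤ nilradical T) (σ : Γ →* GL n T)
    (N : Subgroup Γ) [N.Normal] (hindex : IsUnit (N.index : T)) (hN : N ≤ σ.ker)
    (hunip : ∀ g, IsNilpotent ((Matrix.GeneralLinearGroup.map f (σ g) : Matrix n n S) - 1)) :
    σ = 1 := by
  ext1 g
  have hnil : IsNilpotent ((σ g : Matrix n n T) - 1) :=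
    isNilpotent_of_isNilpotent_mapMatrix hf <| by
      rw [map_sub, map_one]
      exact hunip g
  have hpow : σ g ^ N.index = 1 := by rw [← map_pow]; exact hN (N.pow_index_mem g)
  have hunit : IsUnit (N.index : Matrix n n T) := by
    simpa only [map_natCast] using hindex.map (algebraMap T (Matrix n n T))
  exact Units.ext <| eq_one_of_isNilpotent_sub_one_of_pow_eq_one hnil hunit <|
    congr_arg Units.val hpow

/-- **Corollary 4.3 (group-theoretic content).** Let `p` be a prime, `F` a finite field of
characteristic `p`, and `T` a commutative local `F`-algebra which is finite-dimensional as an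
`F`-vector space, with maximal ideal `m`. Let `G` be a group, `ρ : G → GL_2(T)` a homomorphism
and `ρ̄` its reduction modulo `m`. Let `I ≤ G` be a subgroup and `H` a normal subgroup of `I`
such that `I/H` is cyclic of order dividing `p - 1`, `ρ` is trivial on `H`, and `ρ̄(g)` is
unipotent for every `g ∈ I`. Then `ρ` is trivial on `I`. -/
theorem weight_one_stmt3
    (p : ℕ) (hp : p.Prime) (F T : Type*) [Field F] [Fintype F] [CharP F p]
    [CommRing T] [IsLocalRing T] [Algebra F T] [FiniteDimensional F T]
    (G : Type*) [Group G] (ρ : G →* GL (Fin 2) T)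
    (I : Subgroup G) (H : Subgroup I) [H.Normal]
    (hcyc : IsCyclic (I ⧸ H)) (hord : Nat.card (I ⧸ H) ∣ p - 1)
    (hH : ∀ h : H, ρ ((h : I) : G) = 1)
    (hunip : ∀ g : I, ((Matrix.GeneralLinearGroup.map
        (Ideal.Quotient.mk (IsLocalRing.maximalIdeal T)) (ρ (g : G)) :
          Matrix (Fin 2) (Fin 2) (T ⧸ IsLocalRing.maximalIdeal T)) - 1) ^ 2 = 0) :
    ∀ g ∈ I, ρ g = 1 := by
  have hchar : CharP T p := charP_of_injective_algebraMap (algebraMap F T).injective p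
  have hart : IsArtinianRing T := IsArtinianRing.of_finite F T
  have hker : RingHom.ker (Ideal.Quotient.mk (IsLocalRing.maximalIdeal T)) ≤ nilradical T := by
    rw [Ideal.mk_ker, Ring.KrullDimLE.nilradical_eq_maximalIdeal]
  have htriv : ρ.comp I.subtype = 1 :=
    weight_one_stmt3_general hker (ρ.comp I.subtype) H (isUnit_natCast_of_dvd_sub_one hp hord)
      (fun h hh ↦ hH ⟨h, hh⟩) fun g ↦ ⟨2, hunip g⟩
  exact fun g hg ↦ DFunLike.congr_fun htriv ⟨g, hg⟩
end

section
/- Let F be a field and G a group. Let N and M be F[G]-modules each of dimension 2 as F-vector spaces, and suppose N is indecomposable as an F[G]-module, i.e. N is not the internal direct sum of two nonzero F[G]-submodules. Let α : N → M ⊕ M be an injective homomorphism of F[G]-modules, and let pr_1, pr_2 : M ⊕ M → M denote the two projections. Then pr_1 ∘ α : N → M or pr_2 ∘ α : N → M is an isomorphism of F[G]-modules. -/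
/-!
If neither composite `prᵢ ∘ α` is injective, both have a nonzero kernel. These kernels are
`G`-stable, and they meet trivially because `α` is injective, so in a plane they are complementary
lines. This contradicts the indecomposability of `N`.
-/

open Function LinearMap Module

theorem disjoint_ker_fst_comp_ker_snd_comp {R V W₁ W₂ : Type*} [Semiring R]
    [AddCommMonoid V] [Module R V] [AddCommMonoid W₁] [Module R W₁] [AddCommMonoid W₂] [Module R W₂]
    {f : V →ₗ[R] W₁ × W₂} (hf : Injective f) :
    Disjoint (ker (fst R W₁ W₂ ∘ₗ f)) (ker (snd R W₁ W₂ ∘ₗ f)) := by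
  rw [disjoint_iff, ← ker_prod]
  exact ker_eq_bot_of_injective hf

theorem map_ker_le_ker_of_comp_eq {R V W : Type*} [Semiring R]
    [AddCommMonoid V] [Module R V] [AddCommMonoid W] [Module R W]
    {f : V →ₗ[R] W} {φ : V →ₗ[R] V} {ψ : W →ₗ[R] W} (h : f ∘ₗ φ = ψ ∘ₗ f) :
    (ker f).map φ ≤ ker f := by
  rw [Submodule.map_le_iff_le_comap, ← ker_comp, h]
  exact ker_le_ker_comp f ψ

section VectorSpace

variable {K V W : Type*} [DivisionRing K]
  [AddCommGroup V] [Module K V] [AddCommGroup W] [Module K W]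

theorem isCompl_of_disjoint_of_finrank_le_two [FiniteDimensional K V] (hV : finrank K V ≤ 2)
    {p q : Submodule K V} (hp : p ≠ ⊥) (hq : q ≠ ⊥) (hpq : Disjoint p q) : IsCompl p q := by
  have hp_pos : 1 ≤ finrank K p := Submodule.one_le_finrank_iff.mpr hp
  have hq_pos : 1 ≤ finrank K q := Submodule.one_le_finrank_iff.mpr hq
  exact (Submodule.isCompl_iff_disjoint p q (by lia)).mpr hpq

theorem bijective_of_injective_of_finrank_eq (hV : 0 < finrank K V)
    (hVW : finrank K V = finrank K W) {f : V →ₗ[K] W} (hf : Injective f) : Bijective f := by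
  have : FiniteDimensional K V := finite_of_finrank_pos hV
  have : FiniteDimensional K W := finite_of_finrank_pos (hVW ▸ hV)
  exact ⟨hf, (injective_iff_surjective_of_finrank_eq_finrank hVW).mp hf⟩

end VectorSpace

theorem weight_one_stmt5_general {F G N M₁ M₂ : Type*} [DivisionRing F] [Monoid G]
    [AddCommGroup N] [Module F N] [AddCommGroup M₁] [Module F M₁] [AddCommGroup M₂] [Module F M₂]
    (hN : finrank F N = 2)
    (ρN : Representation F G N) (ρ₁ : Representation F G M₁) (ρ₂ : Representation F G M₂)
    (hindec : ¬ ∃ W₁ W₂ : Submodule F N,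
        (∀ g : G, W₁.map (ρN g) ≤ W₁) ∧ (∀ g : G, W₂.map (ρN g) ≤ W₂) ∧
        W₁ ≠ ⊥ ∧ W₂ ≠ ⊥ ∧ W₁ ⊓ W₂ = ⊥ ∧ W₁ ⊔ W₂ = ⊤)
    (α : N →ₗ[F] M₁ × M₂) (hα : ∀ g : G, α ∘ₗ ρN g = prodMap (ρ₁ g) (ρ₂ g) ∘ₗ α)
    (hinj : Injective α) :
    Injective (fst F M₁ M₂ ∘ₗ α) ∨ Injective (snd F M₁ M₂ ∘ₗ α) := by
  have : FiniteDimensional F N := finite_of_finrank_eq_succ hN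
  have hfst (g : G) : (fst F M₁ M₂ ∘ₗ α) ∘ₗ ρN g = ρ₁ g ∘ₗ fst F M₁ M₂ ∘ₗ α :=
    LinearMap.ext fun x ↦ congrArg Prod.fst (LinearMap.congr_fun (hα g) x)
  have hsnd (g : G) : (snd F M₁ M₂ ∘ₗ α) ∘ₗ ρN g = ρ₂ g ∘ₗ snd F M₁ M₂ ∘ₗ α :=
    LinearMap.ext fun x ↦ congrArg Prod.snd (LinearMap.congr_fun (hα g) x)
  rw [← ker_eq_bot, ← ker_eq_bot]
  by_contra! ⟨hker_fst, hker_snd⟩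
  have hcompl : IsCompl (ker (fst F M₁ M₂ ∘ₗ α)) (ker (snd F M₁ M₂ ∘ₗ α)) :=
    isCompl_of_disjoint_of_finrank_le_two hN.le hker_fst hker_snd
      (disjoint_ker_fst_comp_ker_snd_comp hinj)
  exact hindec ⟨_, _, fun g ↦ map_ker_le_ker_of_comp_eq (hfst g),
    fun g ↦ map_ker_le_ker_of_comp_eq (hsnd g), hker_fst, hker_snd,
    hcompl.inf_eq_bot, hcompl.sup_eq_top⟩

/-- Key step in the proof of Proposition 4.4: let `F` be a field, `G` a group, and `N`, `M`
two-dimensional `F[G]`-modules with `N` indecomposable. If `α : N → M ⊕ M` is an injective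
homomorphism of `F[G]`-modules, then one of the two composites `pr_i ∘ α : N → M` is an
isomorphism of `F[G]`-modules. -/
theorem weight_one_stmt5
    (F : Type*) [Field F] (G : Type*) [Group G]
    (N M : Type*) [AddCommGroup N] [Module F N] [AddCommGroup M] [Module F M]
    (hN : Module.finrank F N = 2) (hM : Module.finrank F M = 2)
    (ρN : Representation F G N) (ρM : Representation F G M)
    (hindec : ¬ ∃ W₁ W₂ : Submodule F N,
        (∀ g : G, W₁.map (ρN g) ≤ W₁) ∧ (∀ g : G, W₂.map (ρN g) ≤ W₂) ∧
        W₁ ≠ ⊥ ∧ W₂ ≠ ⊥ ∧ W₁ ⊓ W₂ = ⊥ ∧ W₁ ⊔ W₂ = ⊤)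
    (α : N →ₗ[F] M × M)
    (hα : ∀ g : G, α ∘ₗ ρN g = (LinearMap.prodMap (ρM g) (ρM g)) ∘ₗ α)
    (hinj : Function.Injective α) :
    Function.Bijective ((LinearMap.fst F M M) ∘ₗ α) ∨
      Function.Bijective ((LinearMap.snd F M M) ∘ₗ α) := by
  have bijective {f : N →ₗ[F] M} : Injective f → Bijective f :=
    bijective_of_injective_of_finrank_eq (by lia) (hN.trans hM.symm)
  exact (weight_one_stmt5_general hN ρN ρM ρM hindec α hα hinj).imp bijective bijective
end

section
/- Let B be a commutative ring, A ⊆ B a subring, and u ∈ B an element such that B = A + uA, i.e. every element of B can be written as a_1 + u·a_2 with a_1, a_2 ∈ A. Then: (1) there exist elements t, d ∈ A such that u^2 = t·u − d in B; and (2) the subset I = A ∩ uA = { x ∈ A : x = u·y for some y ∈ A } is an ideal of B. -/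
section CommSemiring

variable {B S : Type*} [CommSemiring B] [SetLike S B] [SubsemiringClass S B]

/-- The intersection `A ∩ uA` of a subsemiring `A` of `B` with its multiple by `u : B`, as an
additive submonoid: it is an ideal of `B` only under further hypotheses on `A` and `u`. -/
def interMul (A : S) (u : B) : AddSubmonoid B :=
  .ofClass A ⊓ (AddSubmonoid.ofClass A).map (AddMonoidHom.mulLeft u)

variable {A : S} {u : B}

theorem mem_interMul {x : B} : x ∈ interMul A u ↔ x ∈ A ∧ ∃ y ∈ A, x = u * y :=
  and_congr_right' <| exists_congr fun _ => and_congr_right' eq_comm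

theorem mul_mem_interMul {a x : B} (ha : a ∈ A) (hx : x ∈ interMul A u) :
    a * x ∈ interMul A u := by
  obtain ⟨hxA, y, hy, rfl⟩ := mem_interMul.mp hx
  exact mem_interMul.mpr ⟨mul_mem ha hxA, a * y, mul_mem ha hy, mul_left_comm a u y⟩

theorem mul_mem_interMul_of_sq_eq {a t x : B} (ha : a ∈ A) (ht : t ∈ A)
    (hu : u ^ 2 = a + u * t) (hx : x ∈ interMul A u) : u * x ∈ interMul A u := by
  obtain ⟨hxA, y, hy, hxy⟩ := mem_interMul.mp hx
  have mul_eq : u * x = t * x + a * y :=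
    calc
      u * x = u ^ 2 * y := by rw [hxy]; ring
      _ = t * x + a * y := by rw [hu, hxy]; ring
  have mul_mem_A : u * x ∈ A := mul_eq ▸ add_mem (mul_mem ht hxA) (mul_mem ha hy)
  exact mem_interMul.mpr ⟨mul_mem_A, x, hxA, rfl⟩

/-- The intersection `A ∩ uA` as an ideal of `B`, when `B = A + uA`. -/
def interMulIdeal (A : S) (u : B) (h : ∀ b : B, ∃ a₁ ∈ A, ∃ a₂ ∈ A, b = a₁ + u * a₂) :
    Ideal B where
  __ := interMul A u
  smul_mem' b x hx := by
    obtain ⟨a, ha, t, ht, hu⟩ := h (u ^ 2)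
    obtain ⟨a₁, ha₁, a₂, ha₂, rfl⟩ := h b
    rw [smul_eq_mul, add_mul, mul_assoc]
    exact add_mem (mul_mem_interMul ha₁ hx)
      (mul_mem_interMul_of_sq_eq ha ht hu (mul_mem_interMul ha₂ hx))

theorem mem_interMulIdeal (h : ∀ b : B, ∃ a₁ ∈ A, ∃ a₂ ∈ A, b = a₁ + u * a₂) {x : B} :
    x ∈ interMulIdeal A u h ↔ x ∈ A ∧ ∃ y ∈ A, x = u * y :=
  mem_interMul

end CommSemiring

theorem exists_sq_eq_mul_sub {B S : Type*} [CommRing B] [SetLike S B] [NegMemClass S B]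
    {A : S} {u : B} (h : ∃ a₁ ∈ A, ∃ a₂ ∈ A, u ^ 2 = a₁ + u * a₂) :
    ∃ t ∈ A, ∃ d ∈ A, u ^ 2 = t * u - d := by
  obtain ⟨a, ha, t, ht, hu⟩ := h
  exact ⟨t, ht, -a, neg_mem ha, by rw [hu]; ring⟩

/-- **Proposition 2.4 (c), (d) — abstract content.** Let `B` be a commutative ring, `A ⊆ B` a
subring and `u ∈ B` an element with `B = A + uA`. Then (1) there are `t, d ∈ A` with
`u ^ 2 = t * u - d`, and (2) the subset `I = A ∩ uA` is an ideal of `B`. -/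
theorem weight_one_stmt6
    (B : Type*) [CommRing B] (A : Subring B) (u : B)
    (h : ∀ b : B, ∃ a₁ ∈ A, ∃ a₂ ∈ A, b = a₁ + u * a₂) :
    (∃ t ∈ A, ∃ d ∈ A, u ^ 2 = t * u - d) ∧
    (∃ J : Ideal B, ∀ x : B, x ∈ J ↔ x ∈ A ∧ ∃ y ∈ A, x = u * y) :=
  ⟨exists_sq_eq_mul_sub (h (u ^ 2)), interMulIdeal A u h, fun _ => mem_interMulIdeal h⟩
end

section
/- Let A be a commutative local ring and t, d ∈ A. Let B be a commutative ring and suppose there is a surjective ring homomorphism A[X]/(X^2 − tX + d) → B. Then B has at most two maximal ideals. -/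
open Polynomial

/-!
A maximal ideal of `B` pulls back to a maximal ideal of `A[X]/(q)`, where `q` is monic. Since
`A[X]/(q)` is integral over the local ring `A`, its maximal ideals all lie over the maximal ideal
of `A`, so they are points of the closed fiber. The closed fiber is an algebra of dimension `deg q`
over the residue field, and it is the product of its localizations at primes, each of dimension at
least one; hence it has at most `deg q` points.
-/

theorem card_primeSpectrum_le_finrank (K R : Type*) [Field K] [CommRing R] [Algebra K R]
    [Module.Finite K R] : Nat.card (PrimeSpectrum R) ≤ Module.finrank K R := by
  have : IsArtinianRing R := .of_finite K R
  have : Fintype (PrimeSpectrum R) := Fintype.ofFinite _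
  have finrank_localization_pos (p : PrimeSpectrum R) :
      1 ≤ Module.finrank K (Localization.AtPrime p.asIdeal) :=
    have : Module.Finite K (Localization.AtPrime p.asIdeal) :=
      .of_surjective (Algebra.algHom K R (Localization.AtPrime p.asIdeal)).toLinearMap
        (IsArtinianRing.localization_surjective p.asIdeal.primeCompl _)
    Module.finrank_pos
  calc Nat.card (PrimeSpectrum R)
      = ∑ _p : PrimeSpectrum R, 1 := by simp
    _ ≤ ∑ p : PrimeSpectrum R, Module.finrank K (Localization.AtPrime p.asIdeal) :=
      Finset.sum_le_sum fun p _ ↦ finrank_localization_pos p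
    _ = Module.finrank K R := (IsArtinianRing.finrank_eq_sum_primeSpectrum R K).symm

section PrimesOver

variable {R : Type*} (S : Type*) [CommRing R] [CommRing S] [Algebra R S]

theorem encard_primesOver_le_finrank_fiber [Algebra.QuasiFinite R S] (p : Ideal R) [p.IsPrime] :
    (p.primesOver S).encard ≤ Module.finrank p.ResidueField (p.Fiber S) := by
  have finite_primesOver : (p.primesOver S).Finite := Algebra.QuasiFinite.finite_primesOver p
  rw [← finite_primesOver.cast_ncard_eq, Nat.cast_le, ← Nat.card_coe_set_eq,
    Nat.card_congr (PrimeSpectrum.primesOverOrderIsoFiber R S p).toEquiv]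
  exact card_primeSpectrum_le_finrank _ _

theorem encard_primesOver_le_finrank [Module.Finite R S] [Module.Free R S] (p : Ideal R)
    [p.IsPrime] : (p.primesOver S).encard ≤ Module.finrank R S := by
  have : Nontrivial R := (algebraMap R p.ResidueField).domain_nontrivial
  simpa only [Module.finrank_baseChange] using encard_primesOver_le_finrank_fiber S p

theorem setOf_isMaximal_subset_primesOver_maximalIdeal [IsLocalRing R] [Algebra.IsIntegral R S] :
    {I : Ideal S | I.IsMaximal} ⊆ (IsLocalRing.maximalIdeal R).primesOver S :=
  fun I (_ : I.IsMaximal) ↦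
    ⟨inferInstance, ⟨(IsLocalRing.eq_maximalIdeal (Ideal.IsMaximal.under R I)).symm⟩⟩

end PrimesOver

theorem encard_setOf_isMaximal_le_of_surjective {R S : Type*} [CommRing R] [CommRing S]
    {f : R →+* S} (hf : Function.Surjective f) :
    {I : Ideal S | I.IsMaximal}.encard ≤ {I : Ideal R | I.IsMaximal}.encard :=
  Set.encard_le_encard_of_injOn
    (fun _ (_ : Ideal.IsMaximal _) ↦ Ideal.comap_isMaximal_of_surjective f hf)
    (Ideal.comap_injective_of_surjective f hf).injOn

theorem eq_or_eq_or_eq_of_encard_le_two {α : Type*} {s : Set α} (hs : s.encard ≤ 2) {a b c : α}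
    (ha : a ∈ s) (hb : b ∈ s) (hc : c ∈ s) : a = b ∨ a = c ∨ b = c := by
  by_contra! ⟨hab, hac, hbc⟩
  have three_le : ({a, b, c} : Set α).encard ≤ s.encard :=
    Set.encard_le_encard (by simp [Set.insert_subset_iff, ha, hb, hc])
  rw [Set.encard_eq_three.2 ⟨a, b, c, hab, hac, hbc, rfl⟩] at three_le
  exact absurd (three_le.trans hs) (by decide)

theorem weight_one_stmt7_general {A B : Type*} [CommRing A] [IsLocalRing A] [CommRing B]
    {q : A[X]} (hq : q.Monic) {f : (A[X] ⧸ Ideal.span {q}) →+* B} (hf : Function.Surjective f) :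
    {I : Ideal B | I.IsMaximal}.encard ≤ q.natDegree := by
  have : Module.Finite A (A[X] ⧸ Ideal.span {q}) := hq.finite_quotient
  have : Module.Free A (A[X] ⧸ Ideal.span {q}) := hq.free_quotient
  calc {I : Ideal B | I.IsMaximal}.encard
      ≤ {I : Ideal (A[X] ⧸ Ideal.span {q}) | I.IsMaximal}.encard :=
        encard_setOf_isMaximal_le_of_surjective hf
    _ ≤ ((IsLocalRing.maximalIdeal A).primesOver (A[X] ⧸ Ideal.span {q})).encard :=
        Set.encard_le_encard (setOf_isMaximal_subset_primesOver_maximalIdeal _)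
    _ ≤ Module.finrank A (A[X] ⧸ Ideal.span {q}) := encard_primesOver_le_finrank _ _
    _ = q.natDegree := congrArg _ (finrank_quotient_span_eq_natDegree' hq)

/-- **Lemma 2.5 (b) — abstract content.** Let `A` be a commutative local ring, `t, d ∈ A`, and
`B` a commutative ring admitting a surjective ring homomorphism
`A[X]/(X² − tX + d) → B`. Then `B` has at most two maximal ideals. -/
theorem weight_one_stmt7
    (A : Type*) [CommRing A] [IsLocalRing A] (t d : A)
    (B : Type*) [CommRing B]
    (f : (A[X] ⧸ Ideal.span {X ^ 2 - C t * X + C d}) →+* B)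
    (hf : Function.Surjective f) :
    ∀ I₁ I₂ I₃ : Ideal B, I₁.IsMaximal → I₂.IsMaximal → I₃.IsMaximal →
      I₁ = I₂ ∨ I₁ = I₃ ∨ I₂ = I₃ := by
  have encard_le_two : {I : Ideal B | I.IsMaximal}.encard ≤ 2 :=
    (weight_one_stmt7_general (by monicity!) hf).trans (by norm_cast; compute_degree)
  exact fun _ _ _ h₁ h₂ h₃ ↦ eq_or_eq_or_eq_of_encard_le_two encard_le_two h₁ h₂ h₃
end
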